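/- arXiv:1702.00092 — 2 statements merged into one kernel-verified Lean document; each statement's English description precedes it below -/
import Mathlib

section
/- Let q be a real number with q > 1, and let m and r₂ be nonnegative integers. With (q)_j = ∏_{i=1}^{j}(1 − q^{−i}) and (q²)_j = ∏_{i=1}^{j}(1 − q^{−2i}), define for 0 ≤ k ≤ m: p̃(k) = (q)_{2m+r₂} · (q²)_m · (q²)_{m+r₂} / ( q^{k(k+r₂)} · (q)_k · (q)_{k+r₂} · (q²)_{2m+r₂} · (q²)_{m−k} ). Then ∑_{k=0}^{m} q^k · p̃(k) = (1 + q^{−r₂})/(1 + q^{−2m−r₂}). -/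
open Finset

/-- The `q`-Pochhammer-type symbol `(q)_j = ∏_{i=1}^{j}(1 − q^{−i})`. -/
noncomputable def qPoch (q : ℝ) (j : ℕ) : ℝ :=
  ∏ i ∈ Icc 1 j, (1 - (q ^ i)⁻¹)

/-- The symbol `(q²)_j = ∏_{i=1}^{j}(1 − q^{−2i})`. -/
noncomputable def qSqPoch (q : ℝ) (j : ℕ) : ℝ :=
  ∏ i ∈ Icc 1 j, (1 - (q ^ (2 * i))⁻¹)

/-- The summand `p̃(k)` of the mass-formula identity. -/
noncomputable def pTilde (q : ℝ) (m r₂ k : ℕ) : ℝ :=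
  qPoch q (2 * m + r₂) * qSqPoch q m * qSqPoch q (m + r₂) /
    (q ^ (k * (k + r₂)) * qPoch q k * qPoch q (k + r₂) * qSqPoch q (2 * m + r₂) *
      qSqPoch q (m - k))

/-!
Put `x = q⁻¹` and factor `(x²; x²)_n = (x; x)_n (-x; x)_n`. Up to a factor independent of `k`, the
terms `qᵏ p̃(k)` are then, for `a = xʳ` and `b = -a xᵐ`, the terms of
`∑ₖ [m choose k] x^(k choose 2) (a xᵏ⁺¹; x)_{m-k} ∏_{i<k} (a xⁱ - b)`,
a sum contiguous to the following division-free form of the `q`-Chu–Vandermonde identity: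
`∑ₖ [m choose k] x^(k choose 2) (a xᵏ; x)_{m-k} ∏_{i<k} (a xⁱ - b) = (b; x)_m`.
The latter follows by induction on `m` from the Pascal rule for Gaussian binomials, and the same
rule writes the contiguous sum as a combination of two instances of it. At `b = -a xᵐ` the result
factors.
-/

section CommSemiring

variable {R : Type*} [CommSemiring R]

/-- The Gaussian binomial coefficient with base `x`, defined by the `x`-Pascal rule so that it makes
sense in every commutative semiring. -/
def gaussBinom (x : R) : ℕ → ℕ → R
  | _, 0 => 1
  | 0, _ + 1 => 0
  | n + 1, k + 1 => gaussBinom x n k + x ^ (k + 1) * gaussBinom x n (k + 1)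

@[simp]
lemma gaussBinom_zero_right (x : R) (n : ℕ) : gaussBinom x n 0 = 1 := by
  cases n <;> rfl

lemma gaussBinom_succ_succ (x : R) (n k : ℕ) :
    gaussBinom x (n + 1) (k + 1) = gaussBinom x n k + x ^ (k + 1) * gaussBinom x n (k + 1) :=
  rfl

lemma gaussBinom_eq_zero_of_lt (x : R) {n k : ℕ} (h : n < k) : gaussBinom x n k = 0 := by
  induction n generalizing k with
  | zero => obtain _ | k := k <;> [lia; rfl]
  | succ n ih =>
    obtain _ | k := k
    · lia
    · rw [gaussBinom_succ_succ, ih (by lia), ih (by lia), mul_zero, add_zero]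

lemma gaussBinom_self (x : R) (n : ℕ) : gaussBinom x n n = 1 := by
  induction n with
  | zero => rfl
  | succ n ih =>
    rw [gaussBinom_succ_succ, ih, gaussBinom_eq_zero_of_lt x n.lt_succ_self, mul_zero, add_zero]

lemma sum_gaussBinom_succ_mul (x : R) (f : ℕ → R) (n : ℕ) :
    ∑ k ∈ range (n + 2), gaussBinom x (n + 1) k * f k =
      ∑ k ∈ range (n + 1), gaussBinom x n k * (x ^ k * f k + f (k + 1)) := by
  have extend : ∑ k ∈ range (n + 1), gaussBinom x n k * (x ^ k * f k) =
      ∑ k ∈ range (n + 2), gaussBinom x n k * (x ^ k * f k) := by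
    rw [sum_range_succ _ (n + 1), gaussBinom_eq_zero_of_lt x n.lt_succ_self, zero_mul, add_zero]
  simp only [mul_add, sum_add_distrib]
  rw [extend, sum_range_succ' _ (n + 1), sum_range_succ' _ (n + 1), add_right_comm,
    ← sum_add_distrib]
  simp only [gaussBinom_zero_right, pow_zero, one_mul, gaussBinom_succ_succ]
  exact congrArg (· + f 0) (sum_congr rfl fun k _ ↦ by ring)

end CommSemiring

section CommRing

variable {R : Type*} [CommRing R]

/-- The `q`-Pochhammer symbol `(a; x)_n = ∏_{i=0}^{n-1} (1 - a xⁱ)`. Its base `x` corresponds to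
`q⁻¹` above: `qPoch q n` is `(q⁻¹; q⁻¹)_n` and `qSqPoch q n` is `(q⁻²; q⁻²)_n`. -/
def qPochhammer (a x : R) (n : ℕ) : R :=
  ∏ i ∈ range n, (1 - a * x ^ i)

@[simp]
lemma qPochhammer_zero (a x : R) : qPochhammer a x 0 = 1 :=
  prod_range_zero _

lemma qPochhammer_succ (a x : R) (n : ℕ) :
    qPochhammer a x (n + 1) = qPochhammer a x n * (1 - a * x ^ n) :=
  prod_range_succ _ _

lemma qPochhammer_add (a x : R) (m n : ℕ) :
    qPochhammer a x (m + n) = qPochhammer a x m * qPochhammer (a * x ^ m) x n := by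
  simp only [qPochhammer, prod_range_add, pow_add, mul_assoc]

lemma qPochhammer_succ' (a x : R) (n : ℕ) :
    qPochhammer a x (n + 1) = (1 - a) * qPochhammer (a * x) x n := by
  rw [add_comm, qPochhammer_add, qPochhammer_succ]
  simp

lemma qPochhammer_sq (a x : R) (n : ℕ) :
    qPochhammer (a ^ 2) (x ^ 2) n = qPochhammer a x n * qPochhammer (-a) x n := by
  simp only [qPochhammer, ← prod_mul_distrib]
  exact prod_congr rfl fun i _ ↦ by ring

lemma qPochhammer_mul_prod_sub (a c x : R) (j k : ℕ) :
    qPochhammer (c * x) x j * ∏ i ∈ range k, (a * x ^ i - a * (c * x ^ (k + j))) =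
      a ^ k * x ^ k.choose 2 * qPochhammer (c * x) x (k + j) := by
  induction k generalizing j with
  | zero => simp
  | succ k ih =>
    have ih := ih (j + 1)
    rw [qPochhammer_succ, ← add_assoc, add_right_comm] at ih
    rw [prod_range_succ, Nat.choose_succ_succ', Nat.choose_one_right]
    linear_combination a * x ^ k * ih

lemma gaussBinom_mul_qPochhammer_mul_qPochhammer (x : R) (k j : ℕ) :
    gaussBinom x (k + j) k * qPochhammer x x k * qPochhammer x x j = qPochhammer x x (k + j) := by
  induction k generalizing j with
  | zero => simp
  | succ k ihk =>
    induction j with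
    | zero => simp [gaussBinom_self]
    | succ j ihj =>
      have ihk := ihk (j + 1)
      rw [show k + (j + 1) = k + 1 + j by ring, qPochhammer_succ x x j] at ihk
      rw [qPochhammer_succ x x k] at ihj
      rw [← add_assoc, gaussBinom_succ_succ]
      simp only [qPochhammer_succ x x k, qPochhammer_succ x x j, qPochhammer_succ x x (k + 1 + j)]
      linear_combination (1 - x * x ^ k) * ihk + x ^ (k + 1) * (1 - x * x ^ j) * ihj

lemma prod_range_scaled_sub (x a b : R) (k : ℕ) :
    ∏ i ∈ range k, (a * x * x ^ i - b * x) = x ^ k * ∏ i ∈ range k, (a * x ^ i - b) := by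
  simp only [pow_eq_prod_const x k, ← prod_mul_distrib]
  exact prod_congr rfl fun i _ ↦ by ring

-- The Pascal rule pairs adjacent terms so that the sum for `(a, b, m + 1)` becomes `1 - b` times
-- the sum for `(a x, b x, m)`.
theorem sum_gaussBinom_mul_qPochhammer_mul_prod_sub (x a b : R) (m : ℕ) :
    ∑ k ∈ range (m + 1), gaussBinom x m k *
        (x ^ k.choose 2 * qPochhammer (a * x ^ k) x (m - k) * ∏ i ∈ range k, (a * x ^ i - b)) =
      qPochhammer b x m := by
  induction m generalizing a b with
  | zero => simp
  | succ m ih =>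
    rw [sum_gaussBinom_succ_mul, qPochhammer_succ', ← ih (a * x) (b * x), mul_sum]
    refine sum_congr rfl fun k hk ↦ ?_
    rw [Nat.succ_sub (mem_range_succ_iff.mp hk), Nat.succ_sub_succ, qPochhammer_succ',
      prod_range_scaled_sub, prod_range_succ, Nat.choose_succ_succ', Nat.choose_one_right]
    ring_nf

-- This is the contiguous form of the preceding identity, with `a xᵏ⁺¹` in place of `a xᵏ`; here the
-- two terms of the Pascal rule give its instances at `(a x, b x)` and `(a x², b x)`.
theorem sum_gaussBinom_succ_mul_qPochhammer_mul_prod_sub (x a b : R) (m : ℕ) :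
    ∑ k ∈ range (m + 2), gaussBinom x (m + 1) k * (x ^ k.choose 2 *
        qPochhammer (a * x ^ (k + 1)) x (m + 1 - k) * ∏ i ∈ range k, (a * x ^ i - b)) =
      (1 - a * x ^ (m + 1) + (a - b)) * qPochhammer (b * x) x m := by
  rw [sum_gaussBinom_succ_mul, add_mul]
  nth_rw 1 [← sum_gaussBinom_mul_qPochhammer_mul_prod_sub x (a * x) (b * x) m]
  rw [← sum_gaussBinom_mul_qPochhammer_mul_prod_sub x (a * x * x) (b * x) m, mul_sum, mul_sum,
    ← sum_add_distrib]
  refine sum_congr rfl fun k hk ↦ ?_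
  obtain ⟨j, rfl⟩ := Nat.exists_eq_add_of_le (mem_range_succ_iff.mp hk)
  have prod_head : ∏ i ∈ range (k + 1), (a * x ^ i - b) =
      (∏ i ∈ range k, (a * x * x ^ i - b)) * (a - b) := by
    simp only [prod_range_succ', pow_succ', pow_zero, mul_one, mul_assoc]
  rw [prod_range_scaled_sub, prod_range_scaled_sub, prod_head, Nat.succ_sub_succ,
    Nat.succ_sub (Nat.le_add_right k j), Nat.add_sub_cancel_left, qPochhammer_succ,
    Nat.choose_succ_succ', Nat.choose_one_right]
  ring_nf

theorem sum_gaussBinom_mul_qPochhammer_mul_prod_add_mul_one_add (x a : R) (m : ℕ) :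
    (∑ k ∈ range (m + 1), gaussBinom x m k * (x ^ k.choose 2 *
        qPochhammer (a * x ^ (k + 1)) x (m - k) * ∏ i ∈ range k, (a * x ^ i + a * x ^ m))) *
        (1 + a * x ^ (2 * m)) =
      (1 + a) * qPochhammer (-(a * x ^ (m + 1))) x m := by
  cases m with
  | zero => simp
  | succ m =>
    have contiguous := sum_gaussBinom_succ_mul_qPochhammer_mul_prod_sub x a (-(a * x ^ (m + 1))) m
    simp only [sub_neg_eq_add] at contiguous
    rw [contiguous, qPochhammer_succ, neg_mul, mul_assoc a, ← pow_succ]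
    ring

lemma choose_two_add_choose_two_add_self (k : ℕ) : k.choose 2 + k.choose 2 + k = k * k := by
  induction k with
  | zero => rfl
  | succ k ih =>
    rw [Nat.choose_succ_succ', Nat.choose_one_right]
    linarith

lemma gaussBinom_term_mul_qPochhammer (x : R) (r k j : ℕ) :
    gaussBinom x (k + j) k * (x ^ k.choose 2 * qPochhammer (x ^ r * x ^ (k + 1)) x j *
        ∏ i ∈ range k, (x ^ r * x ^ i + x ^ r * x ^ (k + j))) * x ^ k *
        (qPochhammer x x k * qPochhammer x x (k + r) * qPochhammer (x ^ 2) (x ^ 2) j) =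
      x ^ (k * (k + r)) * (qPochhammer x x (k + j + r) * qPochhammer (x ^ 2) (x ^ 2) (k + j)) := by
  have binom := gaussBinom_mul_qPochhammer_mul_qPochhammer x k j
  have tail : qPochhammer x x (k + r) * qPochhammer (x ^ r * x ^ (k + 1)) x j =
      qPochhammer x x (k + j + r) := by
    rw [add_right_comm, qPochhammer_add x x (k + r) j, ← pow_add, ← pow_succ', add_left_comm,
      add_assoc]
  have prod_add : qPochhammer (-x) x j *
        ∏ i ∈ range k, (x ^ r * x ^ i + x ^ r * x ^ (k + j)) =
      (x ^ r) ^ k * x ^ k.choose 2 * qPochhammer (-x) x (k + j) := by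
    simpa using qPochhammer_mul_prod_sub (x ^ r) (-1) x j k
  have exponent : x ^ k.choose 2 * ((x ^ r) ^ k * x ^ k.choose 2) * x ^ k = x ^ (k * (k + r)) := by
    rw [← pow_mul, mul_add k, ← choose_two_add_choose_two_add_self]
    ring
  rw [qPochhammer_sq, qPochhammer_sq, ← binom, ← tail, ← exponent]
  linear_combination gaussBinom x (k + j) k * x ^ k.choose 2 * x ^ k * qPochhammer x x k *
    qPochhammer x x j * qPochhammer x x (k + r) * qPochhammer (x ^ r * x ^ (k + 1)) x j * prod_add

lemma qPochhammer_mul_qPochhammer_sq (x : R) (n m : ℕ) :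
    qPochhammer x x (n + m) * qPochhammer (x ^ 2) (x ^ 2) n *
        qPochhammer (-x ^ (n + 1)) x m =
      qPochhammer x x n * qPochhammer (x ^ 2) (x ^ 2) (n + m) := by
  rw [qPochhammer_sq, qPochhammer_sq, qPochhammer_add (-x), neg_mul, ← pow_succ']
  ring

lemma qPochhammer_ne_zero_of_le {a x : R} {m n : ℕ} (hmn : m ≤ n) (hn : qPochhammer a x n ≠ 0) :
    qPochhammer a x m ≠ 0 := by
  rw [← Nat.add_sub_cancel' hmn, qPochhammer_add] at hn
  exact left_ne_zero_of_mul hn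

lemma qPochhammer_neg_pow_ne_zero {x : R} {n m : ℕ}
    (h : qPochhammer (x ^ 2) (x ^ 2) (n + m) ≠ 0) : qPochhammer (-x ^ (n + 1)) x m ≠ 0 := by
  rw [qPochhammer_sq, qPochhammer_add (-x), neg_mul, ← pow_succ'] at h
  exact right_ne_zero_of_mul (right_ne_zero_of_mul h)

end CommRing

section Field

variable {K : Type*} [Field K]

/-- The summand `p̃(k)` over an arbitrary field, written in terms of `x = q⁻¹`. -/
def massWeight (x : K) (m r k : ℕ) : K :=
  qPochhammer x x (2 * m + r) * qPochhammer (x ^ 2) (x ^ 2) m *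
      qPochhammer (x ^ 2) (x ^ 2) (m + r) * x ^ (k * (k + r)) /
    (qPochhammer x x k * qPochhammer x x (k + r) * qPochhammer (x ^ 2) (x ^ 2) (2 * m + r) *
      qPochhammer (x ^ 2) (x ^ 2) (m - k))

lemma massWeight_div_pow {x : K} (hx : x ≠ 0) {m r k : ℕ} (hk : k ≤ m)
    (h_poch : qPochhammer (x ^ 2) (x ^ 2) (m + r + m) ≠ 0) :
    massWeight x m r k / x ^ k =
      gaussBinom x m k * (x ^ k.choose 2 * qPochhammer (x ^ r * x ^ (k + 1)) x (m - k) *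
        ∏ i ∈ range k, (x ^ r * x ^ i + x ^ r * x ^ m)) / qPochhammer (-x ^ (m + r + 1)) x m := by
  obtain ⟨j, rfl⟩ := Nat.exists_eq_add_of_le hk
  have h_self := left_ne_zero_of_mul (qPochhammer_sq x x _ ▸ h_poch)
  have h_k : qPochhammer x x k ≠ 0 := qPochhammer_ne_zero_of_le (by lia) h_self
  have h_kr : qPochhammer x x (k + r) ≠ 0 := qPochhammer_ne_zero_of_le (by lia) h_self
  have h_j : qPochhammer (x ^ 2) (x ^ 2) j ≠ 0 := qPochhammer_ne_zero_of_le (by lia) h_poch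
  have h_upper := qPochhammer_neg_pow_ne_zero h_poch
  have ratio := qPochhammer_mul_qPochhammer_sq x (k + j + r) (k + j)
  have term := gaussBinom_term_mul_qPochhammer x r k j
  rw [massWeight, Nat.add_sub_cancel_left, show 2 * (k + j) + r = k + j + r + (k + j) by ring,
    div_div, div_eq_div_iff (by positivity) h_upper]
  linear_combination x ^ (k * (k + r)) * qPochhammer (x ^ 2) (x ^ 2) (k + j) * ratio -
    qPochhammer (x ^ 2) (x ^ 2) (k + j + r + (k + j)) * term

theorem qpochhammer_mass_identity_general {x : K} (hx : x ≠ 0) (m r : ℕ)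
    (h_poch : qPochhammer (x ^ 2) (x ^ 2) (2 * m + r) ≠ 0) (h_den : 1 + x ^ (2 * m + r) ≠ 0) :
    ∑ k ∈ range (m + 1), massWeight x m r k / x ^ k = (1 + x ^ r) / (1 + x ^ (2 * m + r)) := by
  rw [show 2 * m + r = m + r + m by ring] at h_poch
  rw [sum_congr rfl fun k hk ↦ massWeight_div_pow hx (mem_range_succ_iff.mp hk) h_poch, ← sum_div,
    div_eq_div_iff (qPochhammer_neg_pow_ne_zero h_poch) h_den]
  convert sum_gaussBinom_mul_qPochhammer_mul_prod_add_mul_one_add x (x ^ r) m using 3 <;> ring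

end Field

lemma qPochhammer_pos {R : Type*} [CommRing R] [LinearOrder R] [IsStrictOrderedRing R] {a x : R}
    (ha₀ : 0 ≤ a) (ha₁ : a < 1) (hx₀ : 0 ≤ x) (hx₁ : x ≤ 1) (n : ℕ) : 0 < qPochhammer a x n :=
  prod_pos fun _ _ ↦ sub_pos.mpr <|
    (mul_le_of_le_one_right ha₀ (pow_le_one₀ hx₀ hx₁)).trans_lt ha₁

lemma qPoch_eq_qPochhammer (q : ℝ) (n : ℕ) : qPoch q n = qPochhammer q⁻¹ q⁻¹ n := by
  induction n with
  | zero => simp [qPoch]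
  | succ n ih =>
    rw [qPochhammer_succ, ← ih, ← pow_succ', inv_pow]
    exact prod_Icc_succ_top (by lia) _

lemma qSqPoch_eq_qPochhammer (q : ℝ) (n : ℕ) :
    qSqPoch q n = qPochhammer (q⁻¹ ^ 2) (q⁻¹ ^ 2) n := by
  simp only [qSqPoch, pow_mul, inv_pow, ← qPoch_eq_qPochhammer, qPoch]

lemma pTilde_eq_massWeight (q : ℝ) (m r k : ℕ) : pTilde q m r k = massWeight q⁻¹ m r k := by
  simp only [pTilde, massWeight, qPoch_eq_qPochhammer, qSqPoch_eq_qPochhammer, inv_pow]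
  ring

/-- Let `q > 1` be a real number and `m`, `r₂` nonnegative integers.  Then
`∑_{k=0}^{m} q^k·p̃(k) = (1 + q^{−r₂})/(1 + q^{−2m−r₂})`. -/
theorem qpochhammer_mass_identity (q : ℝ) (hq : 1 < q) (m r₂ : ℕ) :
    ∑ k ∈ range (m + 1), q ^ k * pTilde q m r₂ k =
      (1 + (q ^ r₂)⁻¹) / (1 + (q ^ (2 * m + r₂))⁻¹) := by
  have hx₀ : 0 < q⁻¹ := by positivity
  have hx_sq : q⁻¹ ^ 2 < 1 := pow_lt_one₀ hx₀.le (inv_lt_one_of_one_lt₀ hq) two_ne_zero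
  have h_poch := qPochhammer_pos (sq_nonneg q⁻¹) hx_sq (sq_nonneg _) hx_sq.le (2 * m + r₂)
  simpa [pTilde_eq_massWeight, div_eq_inv_mul] using
    qpochhammer_mass_identity_general hx₀.ne' m r₂ h_poch.ne' (by positivity)
end

section
/- Let q be a prime power, X an F_q-vector space with dim X = m, e ∈ X a nonzero vector, and Y ⊆ X a subspace with e ∉ Y and dim Y = r. Let t ≥ 1 and let s′ be a nonnegative integer with r + t − m ≤ s′ ≤ min(r, t−1). Then the number of subspaces E ⊆ X with e ∈ E, dim E = t, and dim(E ∩ Y) = s′, divided by the total number of subspaces E ⊆ X with e ∈ E and dim E = t, equals q^{s′(r+t−m−s′)} · (q)_r (q)_{t−1} (q)_{m−1−r} (q)_{m−t} / ( (q)_{r−s′} (q)_{s′} (q)_{t−1−s′} (q)_{m−1} (q)_{m+s′−r−t} ). -/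
open Finset

/-- The `q`-Pochhammer-type symbol `(q)_j = ∏_{i=1}^{j}(1 − q^{−i})` as a rational number. -/
def qPochQ (q : ℕ) (j : ℕ) : ℚ :=
  ∏ i ∈ Icc 1 j, (1 - ((q : ℚ) ^ i)⁻¹)

/-! Passing to the quotient by `e` turns the problem into counting the `k`-dimensional subspaces
`E` of an `n`-dimensional `V` that meet a given `W` in dimension `s`. Sort these by `A = E ∩ W`: in
`V ⧸ A` they become the subspaces of dimension `k - s` disjoint from `W / A`. Subspaces disjoint
from `W` are in turn counted by their bases, which are the tuples independent modulo `W`. -/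

theorem qPochQ_zero (q : ℕ) : qPochQ q 0 = 1 := by
  simp [qPochQ]

theorem qPochQ_succ (q j : ℕ) :
    qPochQ q (j + 1) = qPochQ q j * (1 - ((q : ℚ) ^ (j + 1))⁻¹) :=
  prod_Icc_succ_top (Nat.le_add_left 1 j) _

theorem qPochQ_ne_zero {q : ℕ} (hq : 1 < q) (j : ℕ) : qPochQ q j ≠ 0 := by
  refine prod_ne_zero_iff.2 fun i hi => sub_ne_zero.2 (inv_lt_one_of_one_lt₀ ?_).ne'
  exact one_lt_pow₀ (mod_cast hq) (Nat.one_le_iff_ne_zero.1 (mem_Icc.1 hi).1)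

theorem prod_pow_sub_pow_mul_qPochQ {q : ℕ} (hq : q ≠ 0) (d k : ℕ) :
    (∏ i ∈ range k, ((q : ℚ) ^ (d + k) - q ^ i)) * qPochQ q d =
      (q : ℚ) ^ ((d + k) * k) * qPochQ q (d + k) := by
  have hq₀ : (q : ℚ) ≠ 0 := mod_cast hq
  induction k generalizing d with
  | zero => simp
  | succ k ih =>
    have hfactor : (q : ℚ) ^ (d + 1 + k) - q ^ k =
        q ^ (d + 1 + k) * (1 - ((q : ℚ) ^ (d + 1))⁻¹) := by
      field_simp
      ring
    have hih := ih (d + 1)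
    rw [qPochQ_succ] at hih
    rw [show d + (k + 1) = d + 1 + k by ring, prod_range_succ, hfactor, mul_add_one,
      pow_add _ ((d + 1 + k) * k)]
    linear_combination (q : ℚ) ^ (d + 1 + k) * hih

theorem cast_prod_pow_sub_pow {q : ℕ} (hq : 1 < q) {n k : ℕ} (hk : k ≤ n) :
    ((∏ i : Fin k, (q ^ n - q ^ (i : ℕ)) : ℕ) : ℚ) =
      (q : ℚ) ^ (n * k) * qPochQ q n / qPochQ q (n - k) := by
  obtain ⟨d, rfl⟩ := Nat.exists_eq_add_of_le' hk
  rw [Nat.add_sub_cancel, eq_div_iff (qPochQ_ne_zero hq d),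
    ← prod_pow_sub_pow_mul_qPochQ (by omega), prod_range, Nat.cast_prod]
  congr! 2 with i
  have hle : q ^ (i : ℕ) ≤ q ^ (d + k) := Nat.pow_le_pow_right (by omega) (by omega)
  push_cast [Nat.cast_sub hle]
  rfl

theorem natCard_subtype_eq_mul_of_fiber {α β R : Type*} [Finite α] [Finite β] [Semiring R]
    {p : α → Prop} {r : β → Prop} (f : α → β) (hf : ∀ a, p a → r (f a)) {c : R}
    (hc : ∀ b, r b → (Nat.card {a // p a ∧ f a = b} : R) = c) :
    (Nat.card {a // p a} : R) = Nat.card {b // r b} * c := by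
  have : Fintype {b // r b} := Fintype.ofFinite _
  let g : {a // p a} → {b // r b} := fun a => ⟨f a, hf a a.2⟩
  have hfiber (b : {b // r b}) : (Nat.card {a // g a = b} : R) = c := by
    rw [← hc b b.2]
    exact congrArg _ <| Nat.card_congr <|
      (Equiv.subtypeEquivRight fun a => Subtype.ext_iff).trans
        (Equiv.subtypeSubtypeEquivSubtypeInter p fun a => f a = b)
  rw [← Nat.card_congr (Equiv.sigmaFiberEquiv g), Nat.card_sigma]
  simp only [Nat.cast_sum, hfiber, sum_const, card_univ, nsmul_eq_mul, Nat.card_eq_fintype_card]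

section Quotient

variable {R M : Type*} [Ring R] [AddCommGroup M] [Module R M]

theorem map_mkQ_inf_of_le {A E : Submodule R M} (hAE : A ≤ E) (W : Submodule R M) :
    (E ⊓ W).map A.mkQ = E.map A.mkQ ⊓ W.map A.mkQ := by
  rw [inf_comm, inf_comm (E.map A.mkQ), Submodule.map_inf_eq_map_inf_comap,
    Submodule.comap_map_mkQ, sup_eq_right.2 hAE]

theorem disjoint_map_mkQ_iff_inf_eq {A E W : Submodule R M} (hAE : A ≤ E) (hAW : A ≤ W) :
    Disjoint (E.map A.mkQ) (W.map A.mkQ) ↔ E ⊓ W = A := by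
  rw [disjoint_iff, ← map_mkQ_inf_of_le hAE, ← le_bot_iff, Submodule.map_le_iff_le_comap,
    Submodule.comap_bot, Submodule.ker_mkQ]
  exact ⟨fun h => h.antisymm (le_inf hAE hAW), le_of_eq⟩

theorem natCard_le_and_map_mkQ (A : Submodule R M) (p : Submodule R (M ⧸ A) → Prop) :
    Nat.card {E : Submodule R M // A ≤ E ∧ p (E.map A.mkQ)} = Nat.card {E // p E} :=
  Nat.card_congr <| (Equiv.subtypeSubtypeEquivSubtypeInter (A ≤ ·) (p <| ·.map A.mkQ)).symm.trans
    (A.comapMkQRelIso.symm.toEquiv.subtypeEquiv fun _ => Iff.rfl)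

theorem linearIndependent_mkQ_comp_iff {ι : Type*} {W : Submodule R M} {w : ι → M} :
    LinearIndependent R (W.mkQ ∘ w) ↔
      LinearIndependent R w ∧ Disjoint (Submodule.span R (Set.range w)) W := by
  constructor
  · intro h
    exact ⟨.of_comp _ h, by simpa using Submodule.range_ker_disjoint h⟩
  · rintro ⟨h, hW⟩
    exact h.map (by simpa using hW)

end Quotient

section Dimension

open Module

variable {K V V' : Type*} [DivisionRing K] [AddCommGroup V] [Module K V] [AddCommGroup V']
  [Module K V']

theorem finrank_map_add_finrank_inf_ker (f : V →ₗ[K] V') (E : Submodule K V)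
    [FiniteDimensional K E] :
    finrank K (E.map f) + finrank K (E ⊓ f.ker : Submodule K V) = finrank K E := by
  rw [← (f.domRestrict E).finrank_range_add_finrank_ker, LinearMap.range_domRestrict,
    LinearMap.ker_domRestrict, ← Submodule.finrank_map_subtype_eq, Submodule.map_comap_subtype]

theorem finrank_map_mkQ_add_finrank {A E : Submodule K V} [FiniteDimensional K E] (hAE : A ≤ E) :
    finrank K (E.map A.mkQ) + finrank K A = finrank K E := by
  rw [← finrank_map_add_finrank_inf_ker A.mkQ E, Submodule.ker_mkQ, inf_eq_right.2 hAE]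

theorem finrank_map_mkQ_of_disjoint {A E : Submodule K V} [FiniteDimensional K E]
    (h : Disjoint E A) : finrank K (E.map A.mkQ) = finrank K E := by
  rw [← finrank_map_add_finrank_inf_ker A.mkQ E, Submodule.ker_mkQ, h.eq_bot, finrank_bot,
    add_zero]

theorem natCard_linearIndependent_mkQ_comp (W : Submodule K V) (j : ℕ) :
    Nat.card {w : Fin j → V // LinearIndependent K (W.mkQ ∘ w)} =
      Nat.card {u : Fin j → V ⧸ W // LinearIndependent K u} * Nat.card W ^ j := by
  obtain ⟨C, hC⟩ := W.exists_isCompl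
  let split : V ≃ₗ[K] (V ⧸ W) × W :=
    W.mkQ.equivProdOfSurjectiveOfIsCompl (W.projectionOnto C hC) W.range_mkQ
      (Submodule.range_projectionOnto hC) (by simpa using hC)
  let splitTuple : (Fin j → V) ≃ (Fin j → V ⧸ W) × (Fin j → W) :=
    ((Equiv.refl _).arrowCongr split.toEquiv).trans (Equiv.arrowProdEquivProdArrow _ _ _)
  have hsplit : {w : Fin j → V // LinearIndependent K (W.mkQ ∘ w)} ≃
      {u : Fin j → V ⧸ W // LinearIndependent K u} × (Fin j → W) :=
    (splitTuple.subtypeEquiv fun _ => Iff.rfl).trans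
      (Equiv.prodSubtypeFstEquivSubtypeProd (p := fun u => LinearIndependent K u))
  rw [Nat.card_congr hsplit, Nat.card_prod, Nat.card_fun, Nat.card_fin]

theorem span_range_eq_iff_of_linearIndependent {j : ℕ} {w : Fin j → V} {E : Submodule K V}
    [FiniteDimensional K E] (hw : LinearIndependent K w) (hE : finrank K E = j) :
    Submodule.span K (Set.range w) = E ↔ ∀ i, w i ∈ E := by
  refine ⟨fun h i => h.le (Submodule.subset_span ⟨i, rfl⟩), fun h => ?_⟩
  refine Submodule.eq_of_le_of_finrank_eq (Submodule.span_le.2 (Set.range_subset_iff.2 h)) ?_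
  rw [finrank_span_eq_card hw, Fintype.card_fin, hE]

theorem natCard_linearIndependent_and_span_eq {j : ℕ} {E : Submodule K V} [FiniteDimensional K E]
    (hE : finrank K E = j) :
    Nat.card {w : Fin j → V // LinearIndependent K w ∧ Submodule.span K (Set.range w) = E} =
      Nat.card {v : Fin j → E // LinearIndependent K v} :=
  Nat.card_congr
    { toFun w := ⟨fun i => ⟨w.1 i, (span_range_eq_iff_of_linearIndependent w.2.1 hE).1 w.2.2 i⟩,
        .of_comp E.subtype w.2.1⟩
      invFun v :=
        have hv : LinearIndependent K (E.subtype ∘ v.1) := v.2.map' E.subtype E.ker_subtype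
        ⟨E.subtype ∘ v.1, hv,
          (span_range_eq_iff_of_linearIndependent hv hE).2 fun i => (v.1 i).2⟩
      left_inv _ := rfl
      right_inv _ := rfl }

theorem natCard_finrank_eq_add_and_inf_eq [FiniteDimensional K V] {A W : Submodule K V}
    (hAW : A ≤ W) (j : ℕ) :
    Nat.card {E : Submodule K V // finrank K E = finrank K A + j ∧ E ⊓ W = A} =
      Nat.card {E : Submodule K (V ⧸ A) // finrank K E = j ∧ Disjoint E (W.map A.mkQ)} := by
  rw [← natCard_le_and_map_mkQ A fun E => finrank K E = j ∧ Disjoint E (W.map A.mkQ)]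
  refine Nat.card_congr (Equiv.subtypeEquivRight fun E => ?_)
  constructor
  · rintro ⟨hE, hEW⟩
    have hAE : A ≤ E := hEW ▸ inf_le_left
    have := finrank_map_mkQ_add_finrank hAE
    exact ⟨hAE, by omega, (disjoint_map_mkQ_iff_inf_eq hAE hAW).2 hEW⟩
  · rintro ⟨hAE, hE, hEW⟩
    have := finrank_map_mkQ_add_finrank hAE
    exact ⟨by omega, (disjoint_map_mkQ_iff_inf_eq hAE hAW).1 hEW⟩

theorem natCard_le_and_finrank_eq_add [FiniteDimensional K V] (U : Submodule K V) (k : ℕ) :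
    Nat.card {E : Submodule K V // U ≤ E ∧ finrank K E = finrank K U + k} =
      Nat.card {E : Submodule K (V ⧸ U) // finrank K E = k} := by
  rw [← natCard_le_and_map_mkQ U fun E => finrank K E = k]
  refine Nat.card_congr (Equiv.subtypeEquivRight fun E => and_congr_right fun hUE => ?_)
  rw [← finrank_map_mkQ_add_finrank hUE, add_comm, add_right_inj]

theorem natCard_le_and_finrank_eq_add_and_finrank_inf_eq [FiniteDimensional K V]
    {U Y : Submodule K V} (hUY : Disjoint U Y) (k s : ℕ) :
    Nat.card {E : Submodule K V // U ≤ E ∧ finrank K E = finrank K U + k ∧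
        finrank K (E ⊓ Y : Submodule K V) = s} =
      Nat.card {E : Submodule K (V ⧸ U) // finrank K E = k ∧
        finrank K (E ⊓ Y.map U.mkQ : Submodule K (V ⧸ U)) = s} := by
  rw [← natCard_le_and_map_mkQ U fun E => finrank K E = k ∧
    finrank K (E ⊓ Y.map U.mkQ : Submodule K (V ⧸ U)) = s]
  refine Nat.card_congr (Equiv.subtypeEquivRight fun E => and_congr_right fun hUE => ?_)
  rw [← finrank_map_mkQ_add_finrank hUE, add_comm, add_right_inj, ← map_mkQ_inf_of_le hUE,
    finrank_map_mkQ_of_disjoint (hUY.symm.mono_left inf_le_right)]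

end Dimension

section Counting

open Module

variable {F V : Type*} [Field F] [Fintype F] [AddCommGroup V] [Module F V] [Finite V]

local notation "q" => Fintype.card F

theorem natCard_linearIndependent_mkQ_comp_eq_mul (W : Submodule F V) (j : ℕ) :
    (Nat.card {w : Fin j → V // LinearIndependent F (W.mkQ ∘ w)} : ℚ) =
      Nat.card {E : Submodule F V // finrank F E = j ∧ Disjoint E W} *
        ((q : ℚ) ^ (j * j) * qPochQ q j) := by
  refine natCard_subtype_eq_mul_of_fiber (fun w => Submodule.span F (Set.range w)) ?_ ?_
  · intro w hw
    obtain ⟨hw, hW⟩ := linearIndependent_mkQ_comp_iff.1 hw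
    exact ⟨by rw [finrank_span_eq_card hw, Fintype.card_fin], hW⟩
  · rintro E ⟨hE, hEW⟩
    have hbasis (w : Fin j → V) :
        LinearIndependent F (W.mkQ ∘ w) ∧ Submodule.span F (Set.range w) = E ↔
          LinearIndependent F w ∧ Submodule.span F (Set.range w) = E := by
      rw [linearIndependent_mkQ_comp_iff]
      exact ⟨fun h => ⟨h.1.1, h.2⟩, fun h => ⟨⟨h.1, h.2 ▸ hEW⟩, h.2⟩⟩
    rw [Nat.card_congr (Equiv.subtypeEquivRight hbasis),
      natCard_linearIndependent_and_span_eq hE, card_linearIndependent hE.ge, hE,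
      cast_prod_pow_sub_pow Fintype.one_lt_card le_rfl, Nat.sub_self, qPochQ_zero, div_one]

theorem natCard_finrank_eq_and_disjoint (W : Submodule F V) {j : ℕ}
    (hj : j + finrank F W ≤ finrank F V) :
    (Nat.card {E : Submodule F V // finrank F E = j ∧ Disjoint E W} : ℚ) =
      (q : ℚ) ^ (j * (finrank F V - j)) * qPochQ q (finrank F V - finrank F W) /
        (qPochQ q (finrank F V - finrank F W - j) * qPochQ q j) := by
  have : Finite (V ⧸ W) := Module.finite_of_finite F
  have hq : 1 < q := Fintype.one_lt_card
  have hq₀ : (q : ℚ) ^ (j * j) ≠ 0 := mod_cast (pow_pos (by omega) _).ne'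
  have hquot : finrank F (V ⧸ W) = finrank F V - finrank F W := W.finrank_quotient
  have hcount := natCard_linearIndependent_mkQ_comp_eq_mul W j
  rw [natCard_linearIndependent_mkQ_comp, card_linearIndependent (by omega), hquot, Nat.cast_mul,
    cast_prod_pow_sub_pow hq (by omega), Module.natCard_eq_pow_finrank (K := F) (V := W),
    Nat.card_eq_fintype_card] at hcount
  have hpow : (q : ℚ) ^ ((finrank F V - finrank F W) * j) * (q ^ finrank F W) ^ j =
      q ^ (j * (finrank F V - j)) * q ^ (j * j) := by
    rw [← pow_mul, ← pow_add, ← pow_add, ← add_mul, ← mul_add, Nat.sub_add_cancel (by omega),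
      Nat.sub_add_cancel (by omega), mul_comm]
  have hpoch := qPochQ_ne_zero hq
  rw [eq_div_iff (mul_ne_zero (hpoch _) (hpoch _))]
  refine mul_right_cancel₀ hq₀ ?_
  push_cast at hcount
  field_simp [hpoch (finrank F V - finrank F W - j)] at hcount
  linear_combination -hcount + qPochQ q (finrank F V - finrank F W) * hpow

theorem natCard_finrank_eq {k : ℕ} (hk : k ≤ finrank F V) :
    (Nat.card {E : Submodule F V // finrank F E = k} : ℚ) =
      (q : ℚ) ^ (k * (finrank F V - k)) * qPochQ q (finrank F V) /
        (qPochQ q (finrank F V - k) * qPochQ q k) := by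
  simpa using natCard_finrank_eq_and_disjoint (⊥ : Submodule F V) (j := k) (by simpa using hk)

theorem natCard_finrank_eq_add_and_finrank_inf_eq (W : Submodule F V) {s j : ℕ}
    (hs : s ≤ finrank F W) (hj : j + finrank F W ≤ finrank F V) :
    (Nat.card {E : Submodule F V // finrank F E = s + j ∧
        finrank F (E ⊓ W : Submodule F V) = s} : ℚ) =
      (q : ℚ) ^ (s * (finrank F W - s)) * qPochQ q (finrank F W) /
          (qPochQ q (finrank F W - s) * qPochQ q s) *
        (q ^ (j * (finrank F V - s - j)) * qPochQ q (finrank F V - finrank F W) /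
          (qPochQ q (finrank F V - finrank F W - j) * qPochQ q j)) := by
  rw [← natCard_finrank_eq hs]
  have hinf (E : Submodule F V) : (E.comap W.subtype).map W.subtype = E ⊓ W := by
    rw [Submodule.map_comap_subtype, inf_comm]
  refine natCard_subtype_eq_mul_of_fiber (fun E => E.comap W.subtype) ?_ ?_
  · rintro E ⟨-, hEW⟩
    rw [← Submodule.finrank_map_subtype_eq, hinf, hEW]
  · intro B hB
    let A := B.map W.subtype
    have hAW : A ≤ W := Submodule.map_subtype_le W B
    have hA : finrank F A = s := by rw [Submodule.finrank_map_subtype_eq, hB]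
    have hfiber (E : Submodule F V) :
        (finrank F E = s + j ∧ finrank F (E ⊓ W : Submodule F V) = s) ∧ E.comap W.subtype = B ↔
          finrank F E = finrank F A + j ∧ E ⊓ W = A := by
      rw [← (Submodule.map_injective_of_injective W.subtype_injective).eq_iff, hinf, hA]
      exact ⟨fun h => ⟨h.1.1, h.2⟩, fun h => ⟨⟨h.1, h.2 ▸ hA⟩, h.2⟩⟩
    have : Finite (V ⧸ A) := Module.finite_of_finite F
    have hV := A.finrank_quotient (R := F)
    have hWA := finrank_map_mkQ_add_finrank hAW
    have hdim : finrank F (V ⧸ A) = finrank F V - s := by rw [hV, hA]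
    have hdimW : finrank F (W.map A.mkQ) = finrank F W - s := by omega
    rw [Nat.card_congr (Equiv.subtypeEquivRight hfiber), natCard_finrank_eq_add_and_inf_eq hAW,
      natCard_finrank_eq_and_disjoint _ (by omega), hdim, hdimW, Nat.sub_sub_sub_cancel_right hs]

theorem natCard_finrank_inf_div_natCard_finrank (W : Submodule F V) {k s : ℕ}
    (hsW : s ≤ finrank F W) (hsk : s ≤ k) (hk : finrank F W + k ≤ finrank F V + s) :
    (Nat.card {E : Submodule F V // finrank F E = k ∧
        finrank F (E ⊓ W : Submodule F V) = s} : ℚ) /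
      Nat.card {E : Submodule F V // finrank F E = k} =
    (q : ℚ) ^ ((s : ℤ) * (finrank F W + k - finrank F V - s)) *
        (qPochQ q (finrank F W) * qPochQ q k * qPochQ q (finrank F V - finrank F W) *
          qPochQ q (finrank F V - k)) /
      (qPochQ q (finrank F W - s) * qPochQ q s * qPochQ q (k - s) * qPochQ q (finrank F V) *
        qPochQ q (finrank F V + s - finrank F W - k)) := by
  obtain ⟨j, rfl⟩ := Nat.exists_eq_add_of_le hsk
  have hWV : finrank F W ≤ finrank F V := W.finrank_le
  rw [natCard_finrank_eq_add_and_finrank_inf_eq W hsW (by omega), natCard_finrank_eq (by omega),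
    Nat.add_sub_cancel_left,
    show finrank F V + s - finrank F W - (s + j) = finrank F V - finrank F W - j by omega]
  have hq : 1 < q := Fintype.one_lt_card
  have hq₀ : (q : ℚ) ≠ 0 := mod_cast Fintype.card_ne_zero
  have hpow : (q : ℚ) ^ (s * (finrank F W - s)) * q ^ (j * (finrank F V - s - j)) =
      q ^ ((s : ℤ) * (finrank F W + (s + j : ℕ) - finrank F V - s)) *
        q ^ ((s + j) * (finrank F V - (s + j))) := by
    simp only [← zpow_natCast, ← zpow_add₀ hq₀]
    congr 1
    rw [Nat.sub_sub (finrank F V)]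
    push_cast [Nat.cast_sub hsW, Nat.cast_sub (show s + j ≤ finrank F V by omega)]
    ring
  have hpoch := qPochQ_ne_zero hq
  rw [div_mul_div_comm, mul_mul_mul_comm, hpow]
  field_simp [hpoch]

theorem random_subspace_intersection_probability_general {U Y : Submodule F V}
    (hUY : Disjoint U Y) {t s : ℕ} (hst : s + finrank F U ≤ t) (hsY : s ≤ finrank F Y)
    (ht : finrank F Y + t ≤ finrank F V + s) :
    (Nat.card {E : Submodule F V //
          U ≤ E ∧ finrank F E = t ∧ finrank F (E ⊓ Y : Submodule F V) = s} : ℚ) /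
      Nat.card {E : Submodule F V // U ≤ E ∧ finrank F E = t} =
    (q : ℚ) ^ ((s : ℤ) * (finrank F Y + t - finrank F V - s)) *
        (qPochQ q (finrank F Y) * qPochQ q (t - finrank F U) *
          qPochQ q (finrank F V - finrank F U - finrank F Y) * qPochQ q (finrank F V - t)) /
      (qPochQ q (finrank F Y - s) * qPochQ q s * qPochQ q (t - finrank F U - s) *
        qPochQ q (finrank F V - finrank F U) * qPochQ q (finrank F V + s - finrank F Y - t)) := by
  obtain ⟨k, rfl⟩ := Nat.exists_eq_add_of_le (le_of_add_le_right hst)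
  have : Finite (V ⧸ U) := Module.finite_of_finite F
  have hquot := U.finrank_quotient (R := F)
  have hU : finrank F U ≤ finrank F V := U.finrank_le
  have hY : finrank F (Y.map U.mkQ) = finrank F Y := finrank_map_mkQ_of_disjoint hUY.symm
  have hsum := Submodule.finrank_add_finrank_le_of_disjoint hUY
  have hexp : (s : ℤ) * (finrank F Y + k - (finrank F V - finrank F U : ℕ) - s) =
      s * (finrank F Y + (finrank F U + k : ℕ) - finrank F V - s) := by
    push_cast [Nat.cast_sub hU]
    ring
  rw [natCard_le_and_finrank_eq_add_and_finrank_inf_eq hUY, natCard_le_and_finrank_eq_add,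
    natCard_finrank_inf_div_natCard_finrank _ (by omega) (by omega) (by omega), hY, hquot,
    Nat.add_sub_cancel_left, hexp, Nat.sub_sub _ _ k,
    show finrank F V - finrank F U + s - finrank F Y - k =
      finrank F V + s - finrank F Y - (finrank F U + k) by omega]

end Counting

/-- Let `q` be a prime power, `X` an `F_q`-vector space with `dim X = m`, `e ∈ X` a nonzero
vector, and `Y ⊆ X` a subspace with `e ∉ Y` and `dim Y = r`.  Let `t ≥ 1` and let `s′` be a
nonnegative integer with `r + t − m ≤ s′ ≤ min(r, t−1)`.  Then the number of subspaces
`E ⊆ X` with `e ∈ E`, `dim E = t`, and `dim(E ∩ Y) = s′`, divided by the total number of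
subspaces `E ⊆ X` with `e ∈ E` and `dim E = t`, equals
`q^{s′(r+t−m−s′)} (q)_r (q)_{t−1} (q)_{m−1−r} (q)_{m−t} /
  ((q)_{r−s′} (q)_{s′} (q)_{t−1−s′} (q)_{m−1} (q)_{m+s′−r−t})`. -/
theorem random_subspace_intersection_probability
    {F X : Type*} [Field F] [Fintype F]
    [AddCommGroup X] [Module F X] [FiniteDimensional F X]
    (q m r t s' : ℕ) (hq : q = Fintype.card F)
    (hm : Module.finrank F X = m)
    (e : X) (he : e ≠ 0)
    (Y : Submodule F X) (heY : e ∉ Y) (hr : Module.finrank F Y = r)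
    (ht : 1 ≤ t)
    (hs'₁ : (r : ℤ) + t - m ≤ s') (hs'₂ : s' ≤ r) (hs'₃ : s' ≤ t - 1) :
    (Nat.card {E : Submodule F X //
          e ∈ E ∧ Module.finrank F E = t ∧ Module.finrank F (E ⊓ Y : Submodule F X) = s'} :
        ℚ) /
      (Nat.card {E : Submodule F X // e ∈ E ∧ Module.finrank F E = t} : ℚ) =
    (q : ℚ) ^ ((s' : ℤ) * ((r : ℤ) + t - m - s')) *
        (qPochQ q r * qPochQ q (t - 1) * qPochQ q (m - 1 - r) * qPochQ q (m - t)) /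
      (qPochQ q (r - s') * qPochQ q s' * qPochQ q (t - 1 - s') * qPochQ q (m - 1) *
        qPochQ q (m + s' - r - t)) := by
  subst hq hm hr
  have : Finite X := Module.finite_of_finite F
  have hdisj : Disjoint (Submodule.span F {e}) Y :=
    ((Submodule.disjoint_span_singleton' he).2 heY).symm
  have hdim : Module.finrank F (Submodule.span F {e}) = 1 := finrank_span_singleton he
  simpa only [Submodule.span_singleton_le_iff_mem, hdim] using
    random_subspace_intersection_probability_general hdisj (t := t) (s := s') (by omega) hs'₂
      (by omega)
end
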